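/- Let a, b, c be positive integers and let x ≥ 1 be a real number. Then x^(a+b+c−1) + (−1)^(a+b)·x^c + (−1)^(a+c)·x^b + (−1)^(b+c)·x^a + (−1)^(a+b+c)·(x−1) ≤ G_{a,b,c}(x)·x^(a+b+c−1). -/

import Mathlib

/-!
Put `N = a + b + c - 1` and write `u, v, w` for the signs `(-1)^a, (-1)^b, (-1)^c`.  After cancelling
`x^N`, the claim compares `u v x^c + u w x^b + v w x^a + u v w (x - 1)` with `(G - 1) x^N`.

* If all of `a, b, c` are at least `2`, each of `x^a, x^b, x^c` is at most `x^(N-3)` and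
  `x - 1 ≤ x^(N-4)`, which gives the bound whatever the signs are.
* If only `a = 1`, the left side is `-v x^c - w x^b + v w`.  When `b` and `c` are odd, both are at
  least `3`, and the three terms are bounded by `2 x^(N-3) + x^(N-6)`.  For every other choice of
  parities at most one of the powers has a positive sign, and `2 x^(N-3)` alone suffices.
* If `a = b = 1 < c`, the left side is `x^c - w (x + 1)`.  For even `c` it is at most `x^c`, and for
  odd `c ≥ 3` one uses `x + 1 ≤ x^(c-3) (x + 1)`.
* If `a = b = c = 1` equality holds.

The expression is symmetric in `a, b, c`, so the other positions of the ones follow.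
-/


/-- The function `G_{a,b,c}` of Definition 4.1, defined according to how many of the
positive integers `a`, `b`, `c` are equal to `1`. -/
noncomputable def Gfun (a b c : ℕ) (x : ℝ) : ℝ :=
  match (if a = 1 then 1 else 0) + (if b = 1 then 1 else 0) + (if c = 1 then 1 else 0) with
  | 0 => 1 + 3/x^3 + 1/x^4
  | 1 => 1 + 2/x^3 + 1/x^6
  | 2 => 1 + 1/x + 1/x^3 + 1/x^4
  | _ => 1 + 2/x + 1/x^2

lemma sign_mul_le {s y : ℝ} (hs : s = 1 ∨ s = -1) (hy : 0 ≤ y) : s * y ≤ y := by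
  rcases hs with rfl | rfl <;> linarith

lemma bound_no_one (a b c N : ℕ) (ha : 2 ≤ a) (hb : 2 ≤ b) (hc : 2 ≤ c)
    (hN : N + 1 = a + b + c) (x : ℝ) (hx : 1 ≤ x) :
    x ^ N + (-1 : ℝ) ^ a * (-1) ^ b * x ^ c + (-1 : ℝ) ^ a * (-1) ^ c * x ^ b
      + (-1 : ℝ) ^ b * (-1) ^ c * x ^ a + (-1 : ℝ) ^ a * (-1) ^ b * (-1) ^ c * (x - 1)
    ≤ (1 + 3/x^3 + 1/x^4) * x ^ N := by
  have hx0 : 0 < x := by linarith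
  obtain ⟨M, rfl⟩ : ∃ M, N = M + 4 := ⟨N - 4, by omega⟩
  have e : (1 + 3/x^3 + 1/x^4) * x ^ (M + 4) = x ^ (M + 4) + 3 * x ^ (M + 1) + x ^ M := by
    field_simp
    ring
  have pa : x ^ a ≤ x ^ (M + 1) := pow_le_pow_right₀ hx (by omega)
  have pb : x ^ b ≤ x ^ (M + 1) := pow_le_pow_right₀ hx (by omega)
  have pc : x ^ c ≤ x ^ (M + 1) := pow_le_pow_right₀ hx (by omega)
  have p1 : x ^ 1 ≤ x ^ M := pow_le_pow_right₀ hx (by omega)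
  rw [pow_one] at p1
  simp only [← pow_add]
  have h1 := sign_mul_le (neg_one_pow_eq_or ℝ (a + b)) (pow_nonneg hx0.le c)
  have h2 := sign_mul_le (neg_one_pow_eq_or ℝ (a + c)) (pow_nonneg hx0.le b)
  have h3 := sign_mul_le (neg_one_pow_eq_or ℝ (b + c)) (pow_nonneg hx0.le a)
  have h4 := sign_mul_le (neg_one_pow_eq_or ℝ (a + b + c)) (sub_nonneg.mpr hx)
  rw [e]
  linarith

/-- The case `a = 1`, where the last two terms of the general expression combine to `v * w`. -/
lemma bound_one_one (b c : ℕ) (hb : 2 ≤ b) (hc : 2 ≤ c) (x : ℝ) (hx : 1 ≤ x) :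
    x ^ (b + c) - (-1 : ℝ) ^ b * x ^ c - (-1 : ℝ) ^ c * x ^ b + (-1 : ℝ) ^ b * (-1) ^ c
    ≤ (1 + 2/x^3 + 1/x^6) * x ^ (b + c) := by
  have hx0 : 0 < x := by linarith
  have pb : 1 ≤ x ^ b := one_le_pow₀ hx
  have pc : 1 ≤ x ^ c := one_le_pow₀ hx
  obtain ⟨M, hM⟩ : ∃ M, b + c = M + 3 := ⟨b + c - 3, by omega⟩
  have e : (1 + 2/x^3 + 1/x^6) * x ^ (b + c)
      = x ^ (b + c) + 2 * x ^ M + 1/x^6 * x ^ (b + c) := by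
    rw [hM]
    field_simp
    ring
  have hpos : 0 ≤ 1/x^6 * x ^ (b + c) := by positivity
  have hMpos : 0 ≤ x ^ M := by positivity
  rw [e]
  rcases Nat.even_or_odd b with hb' | hb' <;> rcases Nat.even_or_odd c with hc' | hc' <;>
    simp only [hb'.neg_one_pow, hc'.neg_one_pow]
  · linarith
  · have : c ≠ 2 := by rintro rfl; exact absurd hc' (by decide)
    have : x ^ b ≤ x ^ M := pow_le_pow_right₀ hx (by omega)
    linarith
  · have : b ≠ 2 := by rintro rfl; exact absurd hb' (by decide)
    have : x ^ c ≤ x ^ M := pow_le_pow_right₀ hx (by omega)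
    linarith
  · have : b ≠ 2 := by rintro rfl; exact absurd hb' (by decide)
    have : c ≠ 2 := by rintro rfl; exact absurd hc' (by decide)
    have h1 : x ^ b ≤ x ^ M := pow_le_pow_right₀ hx (by omega)
    have h2 : x ^ c ≤ x ^ M := pow_le_pow_right₀ hx (by omega)
    have h3 : 1 ≤ 1/x^6 * x ^ (b + c) := by
      rw [one_div, inv_mul_eq_div, one_le_div (by positivity)]
      exact pow_le_pow_right₀ hx (by omega)
    linarith

/-- The case `a = b = 1`, where all terms but two combine to `-w * (x + 1)`. -/
lemma bound_two_one (c : ℕ) (hc : 2 ≤ c) (x : ℝ) (hx : 1 ≤ x) :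
    x ^ (c + 1) + x ^ c - (-1 : ℝ) ^ c * (x + 1)
    ≤ (1 + 1/x + 1/x^3 + 1/x^4) * x ^ (c + 1) := by
  have hx0 : 0 < x := by linarith
  have e : (1 + 1/x + 1/x^3 + 1/x^4) * x ^ (c + 1)
      = x ^ (c + 1) + x ^ c + (1/x^3 + 1/x^4) * x ^ (c + 1) := by
    field_simp
    ring
  have hpos : 0 ≤ (1/x^3 + 1/x^4) * x ^ (c + 1) := by positivity
  rcases Nat.even_or_odd c with hc' | hc'
  · rw [e, hc'.neg_one_pow]
    linarith
  · have : c ≠ 2 := by rintro rfl; exact absurd hc' (by decide)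
    obtain ⟨k, rfl⟩ : ∃ k, c = k + 3 := ⟨c - 3, by omega⟩
    have e2 : (1/x^3 + 1/x^4) * x ^ (k + 3 + 1) = x ^ k * (x + 1) := by
      field_simp
      ring
    have : 1 * (x + 1) ≤ x ^ k * (x + 1) :=
      mul_le_mul_of_nonneg_right (one_le_pow₀ hx) (by linarith)
    rw [e, e2, hc'.neg_one_pow]
    linarith

/-- **Lemma 4.3** (numerical core).  For positive integers `a, b, c` and every real
`x ≥ 1`,
`x^(a+b+c-1) + (-1)^(a+b)·x^c + (-1)^(a+c)·x^b + (-1)^(b+c)·x^a + (-1)^(a+b+c)·(x-1)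
  ≤ G_{a,b,c}(x) · x^(a+b+c-1)`. -/
theorem statement_6 (a b c : ℕ) (ha : 1 ≤ a) (hb : 1 ≤ b) (hc : 1 ≤ c)
    (x : ℝ) (hx : 1 ≤ x) :
    x ^ (a + b + c - 1) + (-1 : ℝ) ^ (a + b) * x ^ c + (-1 : ℝ) ^ (a + c) * x ^ b
      + (-1 : ℝ) ^ (b + c) * x ^ a + (-1 : ℝ) ^ (a + b + c) * (x - 1)
    ≤ Gfun a b c x * x ^ (a + b + c - 1) := by
  obtain ⟨N, hN⟩ : ∃ N, N + 1 = a + b + c := ⟨a + b + c - 1, by omega⟩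
  rw [show a + b + c - 1 = N by omega]
  simp only [pow_add (-1 : ℝ)]
  by_cases h1 : a = 1 <;> by_cases h2 : b = 1 <;> by_cases h3 : c = 1 <;>
    simp only [Gfun, h1, h2, h3, if_true, if_false, Nat.reduceAdd]
  · obtain rfl : N = 2 := by omega
    have hx0 : x ≠ 0 := by positivity
    field_simp
    apply le_of_eq
    ring
  · have := bound_two_one c (by omega) x hx
    obtain rfl : N = c + 1 := by omega
    linarith
  · have := bound_two_one b (by omega) x hx
    obtain rfl : N = b + 1 := by omega
    linarith
  · have := bound_one_one b c (by omega) (by omega) x hx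
    obtain rfl : N = b + c := by omega
    linarith
  · have := bound_two_one a (by omega) x hx
    obtain rfl : N = a + 1 := by omega
    linarith
  · have := bound_one_one a c (by omega) (by omega) x hx
    obtain rfl : N = a + c := by omega
    linarith
  · have := bound_one_one a b (by omega) (by omega) x hx
    obtain rfl : N = a + b := by omega
    linarith
  · exact bound_no_one a b c N (by omega) (by omega) (by omega) hN x hx
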